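/- arXiv:1309.1582 — 2 statements merged into one kernel-verified Lean document; each statement's English description precedes it below -/
import Mathlib

section
/- (Brezis–Merle interior estimate, Theorem A.) Let Ω ⊂ ℝ² be an open set, 0 < a ≤ b < +∞, m ∈ ℝ, and K ⊂ Ω a compact set. Then there exists a constant c = c(a, b, m, K, Ω) such that for every function V : Ω → ℝ with a ≤ V(x) ≤ b for all x ∈ Ω, and every C² function u on Ω satisfying −Δu = V e^u in Ω and inf_Ω u ≥ m, one has sup_K u ≤ c. -/
open MeasureTheory Filter Metric

abbrev E2 := EuclideanSpace ℝ (Fin 2)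

noncomputable def pd (j : Fin 2) (u : E2 → ℝ) (x : E2) : ℝ :=
  fderiv ℝ u x (EuclideanSpace.single j 1)

noncomputable def lapl (u : E2 → ℝ) (x : E2) : ℝ :=
  pd 0 (pd 0 u) x + pd 1 (pd 1 u) x


theorem mono_aux {φ φ' : ℝ → ℝ} {p q : ℝ} (hpq : p ≤ q)
    (h : ∀ x ∈ Set.Icc p q, HasDerivAt φ (φ' x) x)
    (h' : ∀ x ∈ Set.Ioo p q, 0 ≤ φ' x) : φ p ≤ φ q := by
  have := monotoneOn_of_deriv_nonneg (convex_Icc p q) (f := φ)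
    (fun x hx => (h x hx).continuousAt.continuousWithinAt)
    (fun x hx => by
      rw [interior_Icc] at hx
      exact (h x (Set.Ioo_subset_Icc_self hx)).differentiableAt.differentiableWithinAt)
    (fun x hx => by
      rw [interior_Icc] at hx
      rw [(h x (Set.Ioo_subset_Icc_self hx)).deriv]
      exact h' x hx)
  exact this (Set.left_mem_Icc.2 hpq) (Set.right_mem_Icc.2 hpq) hpq

set_option maxHeartbeats 1000000 in
theorem ode_aux (a b m R : ℝ) (ha : 0 < a) (hb : 0 < b) (hR : 0 < R) :
    ∃ C : ℝ, ∀ (M f G g : ℝ → ℝ) (U d : ℝ),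
      (∀ r ∈ Set.Ioo (-(2 * R)) (2 * R), HasDerivAt M (G r) r ∧ HasDerivAt f (r * g r) r ∧
        f r = -(r * G r) ∧ a * Real.exp (M r) ≤ g r ∧ m ≤ M r) →
      M 0 = U →
      (∀ r, 0 < r → r < d / 2 → r < 2 * R → g r ≤ 4 * b * Real.exp U) →
      Real.exp (-U / 2) ≤ d / 2 → U ≤ C := by
  obtain ⟨A, hA⟩ : ∃ A, A = Real.exp (3 * Real.exp b / a) := ⟨_, rfl⟩
  obtain ⟨k, hk⟩ : ∃ k, k = Real.log 2 * (a * (R / 4) * Real.exp m) := ⟨_, rfl⟩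
  obtain ⟨C1, hC1⟩ : ∃ C1, C1 = -Real.log (k * (R / 4)) / Real.log 2 := ⟨_, rfl⟩
  obtain ⟨C2, hC2⟩ : ∃ C2, C2 = C1 / (a * Real.exp m * R ^ 2) := ⟨_, rfl⟩
  have hA1 : 1 ≤ A := by
    rw [hA]; apply Real.one_le_exp; positivity
  have hA0 : 0 < A := by linarith
  have hl2 : 0 < Real.log 2 := Real.log_pos (by norm_num)
  have hk0 : 0 < k := by rw [hk]; positivity
  refine ⟨2 * (max C2 0 + Real.log (4 * A / R)), ?_⟩
  intro M f G g U d H hM0 hg hd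
  obtain ⟨l, hl⟩ : ∃ l, l = Real.exp (-U / 2) := ⟨_, rfl⟩
  have hl0 : 0 < l := by rw [hl]; positivity
  have hlog : Real.log l = -U / 2 := by rw [hl, Real.log_exp]
  have hUl : Real.exp U * l ^ 2 = 1 := by
    rw [hl, ← Real.exp_nat_mul, ← Real.exp_add]; simp; ring
  by_cases hs : R / 4 ≤ A * l
  · have h1 : R / (4 * A) ≤ l := by
      rw [div_le_iff₀ (by positivity)]; linarith
    have h2 := Real.log_le_log (by positivity) h1
    have h3 : Real.log (4 * A / R) = - Real.log (R / (4 * A)) := by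
      rw [← Real.log_inv, inv_div]
    have := le_max_right C2 0
    linarith
  push Not at hs
  have hAl : l ≤ A * l := by nlinarith
  have hD : ∀ r, 0 ≤ r → r < 2 * R → r ∈ Set.Ioo (-(2 * R)) (2 * R) := fun r h1 h2 =>
    ⟨by linarith, h2⟩
  have hGf : ∀ r, 0 < r → r < 2 * R → G r = - f r / r := by
    intro r h1 h2
    rw [(H r (hD r h1.le h2)).2.2.1]; field_simp
  have hg0 : ∀ r, 0 ≤ r → r < 2 * R → 0 ≤ g r := fun r h1 h2 =>
    le_trans (by positivity) (H r (hD r h1 h2)).2.2.2.1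
  have hmono : ∀ p q, 0 ≤ p → p ≤ q → q < 2 * R → f p ≤ f q := by
    intro p q hp hpq hq
    refine mono_aux (φ' := fun r => r * g r) hpq (fun x hx => (H x (hD x ?_ ?_)).2.1) ?_
    · linarith [hx.1]
    · linarith [hx.2]
    · intro x hx
      exact mul_nonneg (by linarith [hx.1]) (hg0 x (by linarith [hx.1]) (by linarith [hx.2]))
  have hf0 : f 0 = 0 := by
    rw [(H 0 (hD 0 le_rfl (by linarith))).2.2.1]; simp
  -- step 2
  have hf2 : ∀ r, 0 ≤ r → r ≤ l → f r ≤ 2 * b * Real.exp U * r ^ 2 := by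
    intro r h0 h1
    have := mono_aux (φ := fun r => 2 * b * Real.exp U * r ^ 2 - f r)
      (φ' := fun r => 2 * b * Real.exp U * (2 * r) - r * g r) h0
      (fun x hx => by
        have e1 := (H x (hD x hx.1 (by linarith [hx.2]))).2.1
        have e2 := ((hasDerivAt_pow 2 x).const_mul (2 * b * Real.exp U))
        exact (e2.sub e1).congr_deriv (by norm_num))
      (fun x hx => by
        have := hg x hx.1 (by rw [← hl] at hd; linarith [hx.2]) (by linarith [hx.2])
        have := mul_le_mul_of_nonneg_left this hx.1.le
        linarith)
    simp only [hf0] at this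
    linarith
  have hMl : U - b ≤ M l := by
    have := mono_aux (φ := fun r => M r + b * Real.exp U * r ^ 2)
      (φ' := fun r => G r + b * Real.exp U * (2 * r)) hl0.le
      (fun x hx => by
        have e1 := (H x (hD x hx.1 (by linarith [hx.2]))).1
        have e2 := ((hasDerivAt_pow 2 x).const_mul (b * Real.exp U))
        exact (e1.add e2).congr_deriv (by norm_num))
      (fun x hx => by
        have h1 := hf2 x hx.1.le hx.2.le
        have hx0 := hx.1
        rw [hGf x hx.1 (by linarith [hx.2])]
        have : f x / x ≤ 2 * b * Real.exp U * x := by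
          rw [div_le_iff₀ hx0]; linarith
        rw [neg_div]; linarith)
    simp only [hM0] at this
    have e : b * Real.exp U * l ^ 2 = b := by rw [mul_assoc, hUl, mul_one]
    rw [e] at this
    simp at this
    linarith
  -- step 3
  have hfA : 2 < f (A * l) := by
    by_contra hcon
    push Not at hcon
    have hMr : ∀ r, l ≤ r → r ≤ A * l → -b - 2 * Real.log r ≤ M r := by
      intro r h1 h2
      have := mono_aux (φ := fun r => M r + 2 * Real.log r)
        (φ' := fun r => G r + 2 * r⁻¹) h1
        (fun x hx => by
          have hx0 : 0 < x := by linarith [hx.1]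
          have e1 := (H x (hD x hx0.le (by linarith [hx.2]))).1
          exact e1.add ((Real.hasDerivAt_log hx0.ne').const_mul 2))
        (fun x hx => by
          have hx0 : 0 < x := by linarith [hx.1]
          have := hmono x (A * l) hx0.le (by linarith [hx.2]) (by linarith)
          rw [hGf x hx0 (by linarith [hx.2])]
          have : f x / x ≤ 2 / x := by gcongr; linarith
          rw [neg_div, ← div_eq_mul_inv]; linarith)
      linarith
    have := mono_aux (φ := fun r => f r - a * Real.exp (-b) * Real.log r)
        (φ' := fun r => r * g r - a * Real.exp (-b) * r⁻¹) hAl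
        (fun x hx => by
          have hx0 : 0 < x := by linarith [hx.1]
          have e1 := (H x (hD x hx0.le (by linarith [hx.2]))).2.1
          exact e1.sub ((Real.hasDerivAt_log hx0.ne').const_mul _))
        (fun x hx => by
          have hx0 : 0 < x := by linarith [hx.1]
          have h1 := (H x (hD x hx0.le (by linarith [hx.2]))).2.2.2.1
          have h2 := Real.exp_le_exp.2 (hMr x hx.1.le hx.2.le)
          have h3 : Real.exp (-b - 2 * Real.log x) = Real.exp (-b) * (x⁻¹) ^ 2 := by
            rw [sub_eq_add_neg, Real.exp_add, ← mul_neg, ← Real.log_inv, mul_comm 2,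
              Real.exp_mul, Real.exp_log (by positivity)]
            norm_num
          rw [h3] at h2
          have h4 : a * (Real.exp (-b) * x⁻¹ ^ 2) ≤ g x :=
            (mul_le_mul_of_nonneg_left h2 ha.le).trans h1
          have h5 := mul_le_mul_of_nonneg_left h4 hx0.le
          have h6 : x * (a * (Real.exp (-b) * x⁻¹ ^ 2)) = a * Real.exp (-b) * x⁻¹ := by
            field_simp
          linarith)
    rw [Real.log_mul hA0.ne' hl0.ne'] at this
    have h7 : a * Real.exp (-b) * Real.log A = 3 := by
      rw [hA, Real.log_exp, Real.exp_neg]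
      field_simp
    have h8 : 0 ≤ f l := by
      rw [← hf0]; exact hmono 0 l le_rfl hl0.le (by linarith)
    nlinarith
  -- step 4
  have hMlow : ∀ r, 0 < r → r ≤ R → m + f r * Real.log (R / r) ≤ M r := by
    intro r h0 h1
    have := mono_aux (φ := fun s => - M s - f r * Real.log s)
        (φ' := fun s => - G s - f r * s⁻¹) h1
        (fun x hx => by
          have hx0 : 0 < x := by linarith [hx.1]
          have e1 := (H x (hD x hx0.le (by linarith [hx.2]))).1
          exact e1.neg.sub ((Real.hasDerivAt_log hx0.ne').const_mul _))
        (fun x hx => by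
          have hx0 : 0 < x := by linarith [hx.1]
          have := hmono r x h0.le (by linarith [hx.1]) (by linarith [hx.2])
          rw [hGf x hx0 (by linarith [hx.2])]
          have : f r / x ≤ f x / x := by gcongr
          rw [neg_div, ← div_eq_mul_inv]; linarith)
    have h2 := (H R (hD R hR.le (by linarith))).2.2.2.2
    rw [Real.log_div hR.ne' h0.ne']
    nlinarith
  have hs0 : 0 < A * l := by positivity
  have h4 : a * Real.exp m * R ^ 2 * (Real.log (R / 4) - Real.log (A * l)) ≤ f (R / 4) := by
    have := mono_aux (φ := fun r => f r - a * Real.exp m * R ^ 2 * Real.log r)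
        (φ' := fun r => r * g r - a * Real.exp m * R ^ 2 * r⁻¹) hs.le
        (fun x hx => by
          have hx0 : 0 < x := by linarith [hx.1]
          have e1 := (H x (hD x hx0.le (by linarith [hx.2]))).2.1
          exact e1.sub ((Real.hasDerivAt_log hx0.ne').const_mul _))
        (fun x hx => by
          have hx0 : 0 < x := by linarith [hx.1]
          have hxR : x ≤ R := by linarith [hx.2]
          have h1 := (H x (hD x hx0.le (by linarith [hx.2]))).2.2.2.1
          have hfx := hmono _ x hs0.le hx.1.le (by linarith)
          have hlr : 0 ≤ Real.log (R / x) := Real.log_nonneg (by rw [le_div_iff₀ hx0]; linarith)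
          have h2' : m + 2 * Real.log (R / x) ≤ M x := by
            have := hMlow x hx0 hxR
            nlinarith
          have h2 := Real.exp_le_exp.2 h2'
          have h3 : Real.exp (m + 2 * Real.log (R / x)) = Real.exp m * (R / x) ^ 2 := by
            rw [Real.exp_add, mul_comm 2, Real.exp_mul, Real.exp_log (by positivity)]
            norm_num
          rw [h3] at h2
          have h4 : a * (Real.exp m * (R / x) ^ 2) ≤ g x :=
            (mul_le_mul_of_nonneg_left h2 ha.le).trans h1
          have h5 := mul_le_mul_of_nonneg_left h4 hx0.le
          have h6 : x * (a * (Real.exp m * (R / x) ^ 2)) = a * Real.exp m * R ^ 2 * x⁻¹ := by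
            field_simp
          linarith)
    nlinarith
  -- step 5
  have h5 : f (R / 4) ≤ C1 := by
    have := mono_aux (φ := fun r => - Real.exp (- (f r * Real.log 2)) - k * r)
        (φ' := fun r => - (Real.exp (- (f r * Real.log 2)) * (-(r * g r * Real.log 2))) - k * 1)
        (show R / 4 ≤ R / 2 by linarith)
        (fun x hx => by
          have hx0 : 0 < x := by linarith [hx.1]
          have e1 := (H x (hD x hx0.le (by linarith [hx.2]))).2.1
          exact ((e1.mul_const (Real.log 2)).neg.exp).neg.sub ((hasDerivAt_id x).const_mul k))
        (fun x hx => by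
          have hx0 : 0 < x := by linarith [hx.1]
          have h1 := (H x (hD x hx0.le (by linarith [hx.2]))).2.2.2.1
          have hfx : 0 ≤ f x := by rw [← hf0]; exact hmono 0 x le_rfl hx0.le (by linarith [hx.2])
          have hlr : Real.log 2 ≤ Real.log (R / x) :=
            Real.log_le_log (by norm_num) (by rw [le_div_iff₀ hx0]; linarith [hx.2])
          have h2' : m + f x * Real.log 2 ≤ M x := by
            have := hMlow x hx0 (by linarith [hx.2])
            nlinarith
          have h2 := Real.exp_le_exp.2 h2'
          rw [Real.exp_add] at h2
          have h3 : a * (Real.exp m * Real.exp (f x * Real.log 2)) ≤ g x :=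
            (mul_le_mul_of_nonneg_left h2 ha.le).trans h1
          have h4 : R / 4 * (a * (Real.exp m * Real.exp (f x * Real.log 2))) ≤ x * g x :=
            mul_le_mul hx.1.le h3 (by positivity) hx0.le
          have h5 : k ≤ Real.exp (- (f x * Real.log 2)) * (x * g x * Real.log 2) := by
            have h6 := mul_le_mul_of_nonneg_left
              (mul_le_mul_of_nonneg_right h4 hl2.le) (Real.exp_pos (- (f x * Real.log 2))).le
            refine le_trans (le_of_eq ?_) h6
            rw [hk, Real.exp_neg]
            field_simp
          linarith)
    have h6 : k * (R / 4) ≤ Real.exp (- (f (R / 4) * Real.log 2)) := by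
      have := Real.exp_pos (-(f (R / 2) * Real.log 2))
      linarith
    have h7 := Real.log_le_log (by positivity) h6
    rw [Real.log_exp] at h7
    rw [hC1, le_div_iff₀ hl2]
    linarith
  have h6 : Real.log (R / 4) - Real.log (A * l) ≤ C2 := by
    rw [hC2, le_div_iff₀ (by positivity)]
    linarith
  rw [Real.log_mul hA0.ne' hl0.ne', hlog] at h6
  rw [Real.log_div hR.ne' (by norm_num)] at h6
  rw [Real.log_div (by positivity) hR.ne', Real.log_mul (by norm_num) hA0.ne']
  have := le_max_left C2 0
  linarith

theorem param_aux {F F' : ℝ → ℝ → ℝ} {ρ : ℝ}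
    (hF : ∀ r ∈ Set.Ioo (-ρ) ρ, ∀ θ, HasDerivAt (fun r => F r θ) (F' r θ) r)
    (hFc : ∀ r ∈ Set.Ioo (-ρ) ρ, Continuous (F r))
    (hF' : ContinuousOn (Function.uncurry F') (Set.Ioo (-ρ) ρ ×ˢ Set.univ))
    (r : ℝ) (hr : r ∈ Set.Ioo (-ρ) ρ) :
    HasDerivAt (fun r => ∫ θ in (0 : ℝ)..(2 * Real.pi), F r θ)
      (∫ θ in (0 : ℝ)..(2 * Real.pi), F' r θ) r := by
  obtain ⟨ε, hε, hsub⟩ := Metric.nhds_basis_closedBall.mem_iff.1 (isOpen_Ioo.mem_nhds hr)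
  have hcomp : IsCompact (closedBall r ε ×ˢ Set.Icc (0 : ℝ) (2 * Real.pi)) :=
    (isCompact_closedBall r ε).prod isCompact_Icc
  obtain ⟨B, hB⟩ := hcomp.exists_bound_of_continuousOn
    (hF'.mono (Set.prod_mono hsub (Set.subset_univ _)))
  have hF'c : Continuous (F' r) := by
    have : ContinuousOn (fun θ => Function.uncurry F' (r, θ)) Set.univ :=
      hF'.comp (by fun_prop) (fun θ _ => ⟨hr, Set.mem_univ _⟩)
    exact continuousOn_univ.1 this
  have hpi : (0 : ℝ) ≤ 2 * Real.pi := by positivity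
  refine (intervalIntegral.hasDerivAt_integral_of_dominated_loc_of_deriv_le
    (s := closedBall r ε) (bound := fun _ => B) (closedBall_mem_nhds r hε) ?_ ?_ ?_ ?_ ?_ ?_).2
  · filter_upwards [isOpen_Ioo.mem_nhds hr] with x hx
    exact (hFc x hx).aestronglyMeasurable
  · exact (hFc r hr).intervalIntegrable _ _
  · exact hF'c.aestronglyMeasurable
  · refine Eventually.of_forall (fun t ht x hx => ?_)
    rw [Set.uIoc_of_le hpi] at ht
    exact hB (x, t) ⟨hx, Set.Ioc_subset_Icc_self ht⟩
  · exact intervalIntegrable_const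
  · exact Eventually.of_forall (fun t _ x hx => hF x (hsub hx) t)

theorem chain_aux {w : E2 → ℝ} {γ : ℝ → E2} {v : E2} {t : ℝ}
    (hw : DifferentiableAt ℝ w (γ t)) (hγ : HasDerivAt γ v t) :
    HasDerivAt (fun s => w (γ s)) (v 0 * pd 0 w (γ t) + v 1 * pd 1 w (γ t)) t := by
  have h := hw.hasFDerivAt.comp_hasDerivAt t hγ
  refine h.congr_deriv ?_
  have hv : v = v 0 • EuclideanSpace.single 0 (1 : ℝ) + v 1 • EuclideanSpace.single 1 (1 : ℝ) := by
    ext i; fin_cases i <;> simp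
  conv_lhs => rw [hv]
  simp [pd]

theorem pd_contDiffOn {w : E2 → ℝ} {Ω : Set E2} (hΩ : IsOpen Ω) {n : ℕ}
    (hw : ContDiffOn ℝ (n + 1 : ℕ) w Ω) (j : Fin 2) : ContDiffOn ℝ n (pd j w) Ω := by
  have := hw.fderiv_of_isOpen hΩ (m := n) (by norm_cast)
  exact this.clm_apply contDiffOn_const

noncomputable def ee (θ : ℝ) : E2 := !₂[Real.cos θ, Real.sin θ]
noncomputable def ee' (θ : ℝ) : E2 := !₂[-Real.sin θ, Real.cos θ]

theorem norm_ee (θ : ℝ) : ‖ee θ‖ = 1 := by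
  simp [ee, EuclideanSpace.norm_eq]

theorem ee_cont : Continuous ee := by
  unfold ee; fun_prop

theorem ee_deriv (θ : ℝ) : HasDerivAt ee (ee' θ) θ := by
  have h := ((Real.hasDerivAt_cos θ).smul_const (EuclideanSpace.single 0 (1 : ℝ) : E2)).add
    ((Real.hasDerivAt_sin θ).smul_const (EuclideanSpace.single 1 (1 : ℝ) : E2))
  have h1 : ee = fun t => Real.cos t • (EuclideanSpace.single 0 (1 : ℝ) : E2) +
      Real.sin t • (EuclideanSpace.single 1 (1 : ℝ) : E2) := by
    funext t
    ext i; fin_cases i <;> simp [ee]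
  rw [h1]
  refine HasDerivAt.congr_deriv h ?_
  ext i; fin_cases i <;> simp [ee']

noncomputable def pt (x : E2) (r θ : ℝ) : E2 := x + r • ee θ

theorem pt_cont (x : E2) : Continuous (Function.uncurry (pt x)) := by
  have := ee_cont
  unfold pt Function.uncurry
  fun_prop

theorem pt_dist (x : E2) (r θ : ℝ) : dist (pt x r θ) x = |r| := by
  simp [pt, dist_eq_norm, norm_smul, norm_ee]

theorem pt_mem {x : E2} {r ρ : ℝ} (hr : r ∈ Set.Ioo (-ρ) ρ) (θ : ℝ) : pt x r θ ∈ ball x ρ := by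
  rw [mem_ball, pt_dist, abs_lt]; exact hr

theorem pt_deriv_r (x : E2) (r θ : ℝ) : HasDerivAt (fun r => pt x r θ) (ee θ) r := by
  simpa [pt] using ((hasDerivAt_id r).smul_const (ee θ)).const_add x

theorem pt_deriv_θ (x : E2) (r θ : ℝ) : HasDerivAt (fun θ => pt x r θ) (r • ee' θ) θ := by
  simpa [pt] using ((ee_deriv θ).const_smul r).const_add x

theorem contOn_aux {w : E2 → ℝ} {x : E2} {ρ : ℝ} (hw : ContinuousOn w (ball x ρ)) :
    ContinuousOn (fun p : ℝ × ℝ => w (pt x p.1 p.2)) (Set.Ioo (-ρ) ρ ×ˢ Set.univ) :=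
  hw.comp (pt_cont x).continuousOn (fun p hp => pt_mem hp.1 p.2)

theorem cont_aux {w : E2 → ℝ} {x : E2} {ρ : ℝ} (hw : ContinuousOn w (ball x ρ))
    {r : ℝ} (hr : r ∈ Set.Ioo (-ρ) ρ) : Continuous (fun θ => w (pt x r θ)) := by
  rw [← continuousOn_univ]
  exact hw.comp ((pt_cont x).comp (by fun_prop : Continuous (fun θ : ℝ => (r, θ)))).continuousOn
    (fun θ _ => pt_mem hr θ)

theorem mean_aux {u : E2 → ℝ} {x : E2} {ρ : ℝ} (hu : ContDiffOn ℝ 2 u (ball x ρ))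
    (r : ℝ) (hr : r ∈ Set.Ioo (-ρ) ρ) :
    HasDerivAt (fun r => ∫ θ in (0 : ℝ)..(2 * Real.pi), u (pt x r θ))
      (∫ θ in (0 : ℝ)..(2 * Real.pi),
        (Real.cos θ * pd 0 u (pt x r θ) + Real.sin θ * pd 1 u (pt x r θ))) r ∧
    HasDerivAt (fun r => -(r * ∫ θ in (0 : ℝ)..(2 * Real.pi),
        (Real.cos θ * pd 0 u (pt x r θ) + Real.sin θ * pd 1 u (pt x r θ))))
      (r * ∫ θ in (0 : ℝ)..(2 * Real.pi), -(lapl u (pt x r θ))) r := by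
  have hP : ∀ j, ContDiffOn ℝ 1 (pd j u) (ball x ρ) := fun j =>
    pd_contDiffOn (n := 1) isOpen_ball (by exact_mod_cast hu) j
  have hPP : ∀ i j, ContinuousOn (pd i (pd j u)) (ball x ρ) := fun i j =>
    (pd_contDiffOn (n := 0) isOpen_ball (by exact_mod_cast hP j) i).continuousOn
  have hPc : ∀ j, ContinuousOn (pd j u) (ball x ρ) := fun j => (hP j).continuousOn
  have hud : ∀ y ∈ ball x ρ, DifferentiableAt ℝ u y := fun y hy =>
    (hu.differentiableOn (by norm_num)).differentiableAt (isOpen_ball.mem_nhds hy)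
  have hPd : ∀ j, ∀ y ∈ ball x ρ, DifferentiableAt ℝ (pd j u) y := fun j y hy =>
    ((hP j).differentiableOn (by norm_num)).differentiableAt (isOpen_ball.mem_nhds hy)
  have c0 := fun i => contOn_aux (hPc i)
  have c1 := fun i j => contOn_aux (hPP i j)
  have d0 := fun i => cont_aux (hPc i) hr
  have d1 := fun i j => cont_aux (hPP i j) hr
  have hcont1 : ContinuousOn (fun p : ℝ × ℝ => Real.cos p.2 * pd 0 u (pt x p.1 p.2)
      + Real.sin p.2 * pd 1 u (pt x p.1 p.2)) (Set.Ioo (-ρ) ρ ×ˢ Set.univ) := by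
    have := c0 0
    have := c0 1
    fun_prop
  refine ⟨param_aux (F := fun r θ => u (pt x r θ))
    (F' := fun r θ => Real.cos θ * pd 0 u (pt x r θ) + Real.sin θ * pd 1 u (pt x r θ))
    (ρ := ρ) ?_ ?_ ?_ r hr, ?_⟩
  · intro r hr θ
    have := chain_aux (γ := fun r => pt x r θ) (hud _ (pt_mem hr θ)) (pt_deriv_r x r θ)
    simpa [ee] using this
  · intro r hr
    exact cont_aux hu.continuousOn hr
  · exact hcont1
  have hG : HasDerivAt (fun r => ∫ θ in (0 : ℝ)..(2 * Real.pi),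
        (Real.cos θ * pd 0 u (pt x r θ) + Real.sin θ * pd 1 u (pt x r θ)))
      (∫ θ in (0 : ℝ)..(2 * Real.pi),
        (Real.cos θ * (Real.cos θ * pd 0 (pd 0 u) (pt x r θ) + Real.sin θ * pd 1 (pd 0 u) (pt x r θ))
        + Real.sin θ * (Real.cos θ * pd 0 (pd 1 u) (pt x r θ)
          + Real.sin θ * pd 1 (pd 1 u) (pt x r θ)))) r := by
    refine param_aux
      (F := fun r θ => Real.cos θ * pd 0 u (pt x r θ) + Real.sin θ * pd 1 u (pt x r θ))
      (F' := fun r θ => (Real.cos θ * (Real.cos θ * pd 0 (pd 0 u) (pt x r θ)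
        + Real.sin θ * pd 1 (pd 0 u) (pt x r θ))
        + Real.sin θ * (Real.cos θ * pd 0 (pd 1 u) (pt x r θ)
          + Real.sin θ * pd 1 (pd 1 u) (pt x r θ)))) (ρ := ρ) ?_ ?_ ?_ r hr
    · intro r hr θ
      have e0 := chain_aux (γ := fun r => pt x r θ) (hPd 0 _ (pt_mem hr θ)) (pt_deriv_r x r θ)
      have e1 := chain_aux (γ := fun r => pt x r θ) (hPd 1 _ (pt_mem hr θ)) (pt_deriv_r x r θ)
      have := (e0.const_mul (Real.cos θ)).add (e1.const_mul (Real.sin θ))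
      exact this.congr_deriv (by simp [ee])
    · intro r hr
      have := cont_aux (hPc 0) hr
      have := cont_aux (hPc 1) hr
      fun_prop
    · have := c1 0 0
      have := c1 0 1
      have := c1 1 0
      have := c1 1 1
      unfold Function.uncurry
      fun_prop
  have e00 := d1 0 0
  have e01 := d1 0 1
  have e10 := d1 1 0
  have e11 := d1 1 1
  have f0 := d0 0
  have f1 := d0 1
  -- the angular identity
  have hang : ∫ θ in (0 : ℝ)..(2 * Real.pi),
      ((-Real.cos θ * pd 0 u (pt x r θ) + -Real.sin θ *
        (r * (-Real.sin θ * pd 0 (pd 0 u) (pt x r θ) + Real.cos θ * pd 1 (pd 0 u) (pt x r θ))))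
      + (-Real.sin θ * pd 1 u (pt x r θ) + Real.cos θ *
        (r * (-Real.sin θ * pd 0 (pd 1 u) (pt x r θ) + Real.cos θ * pd 1 (pd 1 u) (pt x r θ)))))
      = 0 := by
    rw [intervalIntegral.integral_eq_sub_of_hasDerivAt
      (f := fun θ => -Real.sin θ * pd 0 u (pt x r θ) + Real.cos θ * pd 1 u (pt x r θ))]
    · simp [pt, ee]
    · intro θ _
      have e0 := chain_aux (hPd 0 _ (pt_mem hr θ)) (pt_deriv_θ x r θ)
      have e1 := chain_aux (hPd 1 _ (pt_mem hr θ)) (pt_deriv_θ x r θ)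
      have := ((Real.hasDerivAt_sin θ).neg.mul e0).add ((Real.hasDerivAt_cos θ).mul e1)
      refine this.congr_deriv ?_
      simp [ee']
      ring
    · apply Continuous.intervalIntegrable
      fun_prop
  refine ((hasDerivAt_id r).mul hG).neg.congr_deriv ?_
  rw [← sub_eq_zero, ← hang]
  simp only [id, one_mul]
  rw [← intervalIntegral.integral_const_mul, ← intervalIntegral.integral_const_mul,
    ← intervalIntegral.integral_add, ← intervalIntegral.integral_neg,
    ← intervalIntegral.integral_sub]
  · congr 1
    funext θ
    unfold lapl
    linear_combination (-r * pd 0 (pd 0 u) (pt x r θ) - r * pd 1 (pd 1 u) (pt x r θ)) *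
      Real.sin_sq_add_cos_sq θ
  all_goals
    apply Continuous.intervalIntegrable
    try unfold lapl
    fun_prop

theorem jensen_aux {h : ℝ → ℝ} (hc : Continuous h) :
    Real.exp ((2 * Real.pi)⁻¹ * ∫ θ in (0 : ℝ)..(2 * Real.pi), h θ) ≤
      (2 * Real.pi)⁻¹ * ∫ θ in (0 : ℝ)..(2 * Real.pi), Real.exp (h θ) := by
  obtain ⟨M, hM⟩ : ∃ M, M = (2 * Real.pi)⁻¹ * ∫ θ in (0 : ℝ)..(2 * Real.pi), h θ := ⟨_, rfl⟩
  rw [← hM]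
  have hpi : (0 : ℝ) < 2 * Real.pi := by positivity
  have h1 : ∫ θ in (0 : ℝ)..(2 * Real.pi), Real.exp M * (1 - M + h θ) ≤
      ∫ θ in (0 : ℝ)..(2 * Real.pi), Real.exp (h θ) := by
    apply intervalIntegral.integral_mono_on hpi.le
    · exact (by fun_prop : Continuous _).intervalIntegrable _ _
    · exact (by fun_prop : Continuous _).intervalIntegrable _ _
    · intro θ _
      have := Real.add_one_le_exp (h θ - M)
      calc _ ≤ Real.exp M * Real.exp (h θ - M) := by gcongr; linarith
        _ = _ := by rw [← Real.exp_add]; congr 1; ring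
  rw [intervalIntegral.integral_const_mul, intervalIntegral.integral_add
    (by simp) (hc.intervalIntegrable _ _), intervalIntegral.integral_const] at h1
  have h2 : ∫ θ in (0 : ℝ)..(2 * Real.pi), h θ = 2 * Real.pi * M := by
    rw [hM]; field_simp
  rw [h2] at h1
  rw [inv_mul_eq_div, le_div_iff₀ hpi]
  simp only [sub_zero, smul_eq_mul] at h1
  refine le_trans (le_of_eq ?_) h1
  ring

theorem stmt1 (Ω : Set E2) (hΩ : IsOpen Ω) (a b m : ℝ) (ha : 0 < a) (hab : a ≤ b)
    (K : Set E2) (hK : IsCompact K) (hKΩ : K ⊆ Ω) :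
    ∃ c : ℝ, ∀ V u : E2 → ℝ,
      (∀ x ∈ Ω, a ≤ V x ∧ V x ≤ b) →
      ContDiffOn ℝ 2 u Ω →
      (∀ x ∈ Ω, -(lapl u x) = V x * Real.exp (u x)) →
      (∀ x ∈ Ω, m ≤ u x) →
      ∀ x ∈ K, u x ≤ c := by
  have hb : 0 < b := lt_of_lt_of_le ha hab
  obtain ⟨δ, hδ, hδΩ⟩ := hK.exists_cthickening_subset_open hΩ hKΩ
  obtain ⟨R, hRδ⟩ : ∃ R, R = δ / 4 := ⟨_, rfl⟩
  have hR : 0 < R := by rw [hRδ]; positivity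
  obtain ⟨C, hC⟩ := ode_aux a b m R ha hb hR
  refine ⟨max C (Real.log (4 / R ^ 2)), ?_⟩
  intro V u hV hu hpde hm z hz
  have hpi : (0 : ℝ) < 2 * Real.pi := by positivity
  have hzΩ : ∀ y, dist y z < 3 * R → y ∈ Ω := by
    intro y hy
    apply hδΩ
    apply mem_cthickening_of_dist_le y z δ K hz
    linarith
  have hucont : ContinuousOn u (closedBall z R) := by
    refine hu.continuousOn.mono (fun y hy => hzΩ y ?_)
    have := mem_closedBall.1 hy
    linarith
  obtain ⟨x₀, hx₀, hmax⟩ := (isCompact_closedBall z R).exists_isMaxOn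
    (f := fun y => (R - dist y z) ^ 2 * Real.exp (u y)) ⟨z, mem_closedBall_self hR.le⟩
    (by fun_prop)
  rw [isMaxOn_iff] at hmax
  obtain ⟨d, hd⟩ : ∃ d, d = R - dist x₀ z := ⟨_, rfl⟩
  rw [← hd] at hmax
  have hdR : d ≤ R := by rw [hd]; linarith [dist_nonneg (x := x₀) (y := z)]
  have hd0' : 0 ≤ d := by rw [hd]; linarith [mem_closedBall.1 hx₀]
  have hzmax := hmax z (mem_closedBall_self hR.le)
  simp only [dist_self, sub_zero] at hzmax
  have hd0 : 0 < d := by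
    rcases hd0'.eq_or_lt with h | h
    · exfalso
      rw [← h] at hzmax
      have : 0 < R ^ 2 * Real.exp (u z) := by positivity
      simp at hzmax
      linarith
    · exact h
  by_cases hl : Real.exp (-(u x₀) / 2) ≤ d / 2
  · refine le_trans ?_ (le_max_left _ _)
    have hball : ball x₀ (2 * R) ⊆ Ω := by
      intro y hy
      apply hzΩ
      have h1 := dist_triangle y x₀ z
      have h2 := mem_ball.1 hy
      linarith
    have hu' := hu.mono hball
    have hlap : ∀ y ∈ Ω, -(lapl u y) = V y * Real.exp (u y) := hpde
    have hlapc : ContinuousOn (fun y => -(lapl u y)) (ball x₀ (2 * R)) := by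
      have hP : ∀ j, ContDiffOn ℝ 1 (pd j u) (ball x₀ (2 * R)) := fun j =>
        pd_contDiffOn (n := 1) isOpen_ball (by exact_mod_cast hu') j
      have hPP : ∀ i j, ContinuousOn (pd i (pd j u)) (ball x₀ (2 * R)) := fun i j =>
        (pd_contDiffOn (n := 0) isOpen_ball (by exact_mod_cast hP j) i).continuousOn
      exact ((hPP 0 0).add (hPP 1 1)).neg
    have hU : u x₀ ≤ C := by
      refine hC (fun r => (2 * Real.pi)⁻¹ * ∫ θ in (0 : ℝ)..(2 * Real.pi), u (pt x₀ r θ))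
        (fun r => (2 * Real.pi)⁻¹ * -(r * ∫ θ in (0 : ℝ)..(2 * Real.pi),
          (Real.cos θ * pd 0 u (pt x₀ r θ) + Real.sin θ * pd 1 u (pt x₀ r θ))))
        (fun r => (2 * Real.pi)⁻¹ * ∫ θ in (0 : ℝ)..(2 * Real.pi),
          (Real.cos θ * pd 0 u (pt x₀ r θ) + Real.sin θ * pd 1 u (pt x₀ r θ)))
        (fun r => (2 * Real.pi)⁻¹ * ∫ θ in (0 : ℝ)..(2 * Real.pi), -(lapl u (pt x₀ r θ)))
        (u x₀) d ?_ ?_ ?_ hl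
      · intro r hr
        obtain ⟨h1, h2⟩ := mean_aux hu' r hr
        have huc := cont_aux hu'.continuousOn hr
        have hlc := cont_aux hlapc hr
        refine ⟨h1.const_mul _, (h2.const_mul _).congr_deriv (by ring), by ring, ?_, ?_⟩
        · have h3 := mul_le_mul_of_nonneg_left (jensen_aux huc) ha.le
          refine h3.trans ?_
          rw [mul_left_comm, ← intervalIntegral.integral_const_mul]
          refine mul_le_mul_of_nonneg_left ?_ (by positivity)
          apply intervalIntegral.integral_mono_on hpi.le
          · exact (continuous_const.mul (Real.continuous_exp.comp huc)).intervalIntegrable _ _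
          · exact hlc.intervalIntegrable _ _
          · intro θ _
            have hy := hball (pt_mem hr θ)
            rw [hlap _ hy]
            exact mul_le_mul_of_nonneg_right (hV _ hy).1 (Real.exp_pos _).le
        · have h3 : ∫ θ in (0 : ℝ)..(2 * Real.pi), m ≤
              ∫ θ in (0 : ℝ)..(2 * Real.pi), u (pt x₀ r θ) := by
            apply intervalIntegral.integral_mono_on hpi.le
            · simp
            · exact huc.intervalIntegrable _ _
            · intro θ _
              exact hm _ (hball (pt_mem hr θ))
          simp only [intervalIntegral.integral_const, sub_zero, smul_eq_mul] at h3
          rw [inv_mul_eq_div, le_div_iff₀ hpi]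
          linarith
      · simp only [pt, zero_smul, add_zero, intervalIntegral.integral_const, sub_zero, smul_eq_mul]
        field_simp
      · intro r hr0 hrd hr2
        have hr : r ∈ Set.Ioo (-(2 * R)) (2 * R) := ⟨by linarith, hr2⟩
        have hlc := cont_aux hlapc hr
        have h3 : ∫ θ in (0 : ℝ)..(2 * Real.pi), -(lapl u (pt x₀ r θ)) ≤
            ∫ θ in (0 : ℝ)..(2 * Real.pi), 4 * b * Real.exp (u x₀) := by
          apply intervalIntegral.integral_mono_on hpi.le
          · exact hlc.intervalIntegrable _ _
          · simp
          · intro θ _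
            have hy := hball (pt_mem hr θ)
            rw [hlap _ hy]
            have hdist := pt_dist x₀ r θ
            rw [abs_of_pos hr0] at hdist
            have htri := dist_triangle (pt x₀ r θ) x₀ z
            have hge : d / 2 ≤ R - dist (pt x₀ r θ) z := by linarith
            have hmx := hmax (pt x₀ r θ) (mem_closedBall.2 (by linarith))
            have hsq : (d / 2) ^ 2 ≤ (R - dist (pt x₀ r θ) z) ^ 2 := by gcongr
            have h4 := (mul_le_mul_of_nonneg_right hsq (Real.exp_pos (u (pt x₀ r θ))).le).trans hmx
            have h5 : Real.exp (u (pt x₀ r θ)) ≤ 4 * Real.exp (u x₀) := by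
              have hd2 : 0 < d ^ 2 := by positivity
              have : d ^ 2 * Real.exp (u (pt x₀ r θ)) ≤ d ^ 2 * (4 * Real.exp (u x₀)) := by
                linarith
              exact le_of_mul_le_mul_left this hd2
            calc V (pt x₀ r θ) * Real.exp (u (pt x₀ r θ))
                ≤ b * Real.exp (u (pt x₀ r θ)) :=
                  mul_le_mul_of_nonneg_right (hV _ hy).2 (Real.exp_pos _).le
              _ ≤ b * (4 * Real.exp (u x₀)) := mul_le_mul_of_nonneg_left h5 hb.le
              _ = _ := by ring
        simp only [intervalIntegral.integral_const, sub_zero, smul_eq_mul] at h3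
        rw [inv_mul_eq_div, div_le_iff₀ hpi]
        linarith
    refine le_trans ?_ hU
    rw [← Real.exp_le_exp]
    have h1 : d ^ 2 ≤ R ^ 2 := by gcongr
    have h2 := hzmax.trans (mul_le_mul_of_nonneg_right h1 (Real.exp_pos (u x₀)).le)
    exact le_of_mul_le_mul_left h2 (by positivity)
  · refine le_trans ?_ (le_max_right _ _)
    push Not at hl
    have h1 : d ^ 2 * Real.exp (u x₀) ≤ 4 := by
      have h2 : Real.exp (u x₀) * Real.exp (-(u x₀) / 2) ^ 2 = 1 := by
        rw [← Real.exp_nat_mul, ← Real.exp_add]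
        simp; ring
      have h3 : (d / 2) ^ 2 ≤ Real.exp (-(u x₀) / 2) ^ 2 := by gcongr
      have h4 := mul_le_mul_of_nonneg_left h3 (Real.exp_pos (u x₀)).le
      rw [h2] at h4
      linarith
    rw [Real.le_log_iff_exp_le (by positivity), le_div_iff₀ (by positivity)]
    linarith
end

section
/- (Consequence of Theorem A.) Let Ω ⊂ ℝ² be a bounded open set with smooth boundary, 0 < a ≤ b < +∞, and K ⊂ Ω a compact set. Then there exists a constant c = c(a, b, K, Ω) such that for every function V : Ω → ℝ with a ≤ V(x) ≤ b for all x ∈ Ω, and every C² function u on the closure of Ω satisfying −Δu = V e^u in Ω and u = 0 on ∂Ω, one has sup_K u ≤ c. -/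
open MeasureTheory Filter Metric

/-- Monotonicity from a nonnegative derivative on a left half-line. -/
lemma mono_Iio {τ : ℝ} {H H1 : ℝ → ℝ} (h1 : ∀ t < τ, HasDerivAt H (H1 t) t)
    (hn : ∀ t < τ, 0 ≤ H1 t) : MonotoneOn H (Set.Iio τ) := by
  refine monotoneOn_of_hasDerivWithinAt_nonneg (convex_Iio τ)
    (fun t ht => (h1 t ht).continuousAt.continuousWithinAt) (f' := H1) ?_ ?_
  · intro t ht
    rw [interior_Iio] at ht
    exact (h1 t ht).hasDerivWithinAt
  · intro t ht
    rw [interior_Iio] at ht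
    exact hn t ht

/-- A convex function bounded above on a left half-line is nondecreasing. -/
lemma deriv_nonneg_of_bdd {τ B : ℝ} {H H1 H2 : ℝ → ℝ} (h1 : ∀ t < τ, HasDerivAt H (H1 t) t)
    (h2 : ∀ t < τ, HasDerivAt H1 (H2 t) t) (hn : ∀ t < τ, 0 ≤ H2 t)
    (hB : ∀ t < τ, H t ≤ B) : ∀ t < τ, 0 ≤ H1 t := by
  intro t0 ht0
  by_contra! hneg
  have hm := mono_Iio h2 hn
  -- K(t) = H1 t0 * t - H t is monotone on Iio t0
  have hK : MonotoneOn (fun t => H1 t0 * t - H t) (Set.Iio t0) := by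
    refine mono_Iio (H1 := fun t => H1 t0 - H1 t) ?_ ?_
    · intro t ht
      exact (((hasDerivAt_id t).const_mul (H1 t0)).sub (h1 t (ht.trans ht0))).congr_deriv (by simp)
    · intro t ht
      have := hm (show t ∈ Set.Iio τ from ht.trans ht0) ht0 ht.le
      simpa using this
  set s := t0 - 1
  have hs : s < t0 := by simp [s]
  set c := H1 t0 * s - H s
  -- choose t very negative
  have key : ∀ t ≤ s, H1 t0 * t - c ≤ B := by
    intro t ht
    have h1' := hK (show t ∈ Set.Iio t0 from lt_of_le_of_lt ht hs) hs ht
    have := hB t ((lt_of_le_of_lt ht hs).trans ht0)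
    simp only at h1'
    linarith
  have h3 := key (min s ((B + c + 1) / H1 t0)) (min_le_left _ _)
  have h4 : H1 t0 * ((B + c + 1) / H1 t0) ≤ H1 t0 * min s ((B + c + 1) / H1 t0) :=
    mul_le_mul_of_nonpos_left (min_le_right _ _) hneg.le
  rw [mul_div_cancel₀ _ hneg.ne] at h4
  linarith

lemma ge_limit {τ T : ℝ} {H : ℝ → ℝ} (hm : MonotoneOn H (Set.Iio τ))
    (hl : Tendsto H atBot (nhds T)) : ∀ t < τ, T ≤ H t := by
  intro t ht
  refine le_of_tendsto hl ?_
  filter_upwards [eventually_le_atBot t] with s hs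
  exact hm (show s ∈ Set.Iio τ from lt_of_le_of_lt hs ht) ht hs

/-- The one-dimensional argument. -/
lemma core_bound {τ t0 t1 a C : ℝ} {w w1 w2 : ℝ → ℝ} (ha : 0 < a)
    (h1 : ∀ t < τ, HasDerivAt w (w1 t) t) (h2 : ∀ t < τ, HasDerivAt w1 (w2 t) t)
    (hw2 : ∀ t < τ, w2 t ≤ -(a * Real.exp (w t)))
    (hslope : ∀ t < τ, w1 t ≤ 2) (h01 : t0 ≤ t1) (h1τ : t1 < τ)
    (hup : w t0 ≤ 0) (hlow0 : -C ≤ w t0) (hlow1 : -C ≤ w t1) (hC : 0 ≤ C) :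
    t1 - t0 ≤ 1 + 2 * (2 + C) / (a * Real.exp (-C)) := by
  have hlt : ∀ t ∈ Set.Icc t0 t1, t < τ := fun t ht => lt_of_le_of_lt ht.2 h1τ
  have hconc : ConcaveOn ℝ (Set.Icc t0 t1) w := by
    refine concaveOn_of_hasDerivWithinAt2_nonpos (convex_Icc _ _)
      (fun t ht => (h1 t (hlt t ht)).continuousAt.continuousWithinAt) (f' := w1) (f'' := w2) ?_ ?_ ?_
    · exact fun t ht => (h1 t (hlt t (interior_subset ht))).hasDerivWithinAt
    · exact fun t ht => (h2 t (hlt t (interior_subset ht))).hasDerivWithinAt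
    · intro t ht
      have := hw2 t (hlt t (interior_subset ht))
      have : 0 < a * Real.exp (w t) := by positivity
      linarith
  have hwlow : ∀ t ∈ Set.Icc t0 t1, -C ≤ w t := by
    intro t ht
    refine le_trans (le_min hlow0 hlow1) ?_
    exact hconc.min_le_of_mem_Icc (Set.left_mem_Icc.2 h01) (Set.right_mem_Icc.2 h01) ht
  set k := a * Real.exp (-C) with hk
  have hkpos : 0 < k := by positivity
  have hw2k : ∀ t ∈ Set.Icc t0 t1, w2 t ≤ -k := by
    intro t ht
    have h := hw2 t (hlt t ht)
    have : k ≤ a * Real.exp (w t) :=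
      mul_le_mul_of_nonneg_left (Real.exp_le_exp.2 (hwlow t ht)) ha.le
    linarith
  have hw1 : ∀ t ∈ Set.Icc t0 t1, w1 t ≤ 2 - k * (t - t0) := by
    have hmono : MonotoneOn (fun t => -w1 t - k * t) (Set.Icc t0 t1) := by
      have hd : ∀ t ∈ Set.Icc t0 t1, HasDerivAt (fun t => -w1 t - k * t) (-w2 t - k) t := by
        intro t ht
        exact ((h2 t (hlt t ht)).neg.sub ((hasDerivAt_id t).const_mul k)).congr_deriv (by simp)
      refine monotoneOn_of_hasDerivWithinAt_nonneg (convex_Icc _ _)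
        (fun t ht => (hd t ht).continuousAt.continuousWithinAt) (f' := fun t => -w2 t - k) ?_ ?_
      · exact fun t ht => (hd t (interior_subset ht)).hasDerivWithinAt
      · intro t ht
        have := hw2k t (interior_subset ht)
        linarith
    intro t ht
    have := hmono (Set.left_mem_Icc.2 h01) ht ht.1
    have h3 := hslope t0 (lt_of_le_of_lt h01 h1τ)
    simp only at this
    linarith
  have hfin : w t1 ≤ w t0 + 2 * (t1 - t0) - k * (t1 - t0) ^ 2 / 2 := by
    have hmono : MonotoneOn (fun t => 2 * (t - t0) - k * (t - t0) ^ 2 / 2 - w t)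
        (Set.Icc t0 t1) := by
      have hd : ∀ t ∈ Set.Icc t0 t1, HasDerivAt
          (fun t => 2 * (t - t0) - k * (t - t0) ^ 2 / 2 - w t) (2 - k * (t - t0) - w1 t) t := by
        intro t ht
        have hb : HasDerivAt (fun t : ℝ => t - t0) 1 t := (hasDerivAt_id t).sub_const t0
        have := ((hb.const_mul 2).sub (((hb.pow 2).const_mul k).div_const 2)).sub (h1 t (hlt t ht))
        refine this.congr_deriv ?_
        norm_num
        ring
      refine monotoneOn_of_hasDerivWithinAt_nonneg (convex_Icc _ _)
        (fun t ht => (hd t ht).continuousAt.continuousWithinAt)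
        (f' := fun t => 2 - k * (t - t0) - w1 t) ?_ ?_
      · exact fun t ht => (hd t (interior_subset ht)).hasDerivWithinAt
      · intro t ht
        have := hw1 t (interior_subset ht)
        linarith
    have := hmono (Set.left_mem_Icc.2 h01) (Set.right_mem_Icc.2 h01) h01
    simp only [sub_self] at this
    linarith
  set l := t1 - t0
  have hfin2 : k * l ^ 2 / 2 ≤ 2 * l + C := by linarith
  by_contra! hcon
  have hq : 0 ≤ 2 * (2 + C) / k := by positivity
  have hl1 : 1 < l := by linarith
  have hl2 : 2 * (2 + C) / k < l := by linarith
  rw [div_lt_iff₀ hkpos] at hl2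
  nlinarith

/-- Differentiation of a parametric integral over the circle. -/
lemma deriv_param {τ : ℝ} {W P : ℝ → ℝ → ℝ}
    (hd : ∀ t < τ, ∀ θ, HasDerivAt (fun t => W t θ) (P t θ) t)
    (hW : ∀ t < τ, Continuous (W t))
    (hP : ContinuousOn (fun p : ℝ × ℝ => P p.1 p.2) (Set.Iio τ ×ˢ Set.univ)) (t : ℝ) (ht : t < τ) :
    HasDerivAt (fun t => ∫ θ in (0:ℝ)..(2 * Real.pi), W t θ)
      (∫ θ in (0:ℝ)..(2 * Real.pi), P t θ) t := by
  obtain ⟨t', ht', ht''⟩ := exists_between ht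
  have hcomp : IsCompact (Set.Icc (t - 1) t' ×ˢ Set.Icc 0 (2 * Real.pi)) :=
    isCompact_Icc.prod isCompact_Icc
  have hsub : Set.Icc (t - 1) t' ×ˢ Set.Icc 0 (2 * Real.pi) ⊆ Set.Iio τ ×ˢ (Set.univ : Set ℝ) :=
    fun p hp => ⟨lt_of_le_of_lt hp.1.2 ht'', trivial⟩
  obtain ⟨M, hM⟩ := hcomp.exists_bound_of_continuousOn (hP.mono hsub)
  have hPt : Continuous (P t) := by
    have : ContinuousOn (fun θ : ℝ => P t θ) Set.univ :=
      hP.comp (f := fun θ : ℝ => (t, θ)) (by fun_prop) (fun θ _ => ⟨ht, trivial⟩)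
    exact continuousOn_univ.1 this
  have h := intervalIntegral.hasDerivAt_integral_of_dominated_loc_of_deriv_le (μ := volume)
    (F := W) (F' := P) (x₀ := t) (s := Set.Icc (t - 1) t') (a := 0) (b := 2 * Real.pi)
    (bound := fun _ => M) (Icc_mem_nhds (by linarith) ht')
    (by
      filter_upwards [Iio_mem_nhds ht] with s hs
      exact (hW s hs).aestronglyMeasurable)
    ((hW t ht).intervalIntegrable _ _)
    hPt.aestronglyMeasurable
    (by
      refine Eventually.of_forall fun θ hθ s hs => ?_
      rw [Set.uIoc_of_le (by positivity)] at hθ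
      exact hM (s, θ) ⟨hs, hθ.1.le, hθ.2⟩)
    (by simp)
    (by
      refine Eventually.of_forall fun θ hθ s hs => hd s (lt_of_le_of_lt hs.2 ht'') θ)
  exact h.2

noncomputable def pol (x : E2) (t θ : ℝ) : E2 :=
  x + Real.exp t • (Real.cos θ • EuclideanSpace.single 0 1 + Real.sin θ • EuclideanSpace.single 1 1)

lemma pol_dist (x : E2) (t θ : ℝ) : dist (pol x t θ) x = Real.exp t := by
  rw [dist_eq_norm, pol, add_sub_cancel_left, norm_smul, Real.norm_of_nonneg (Real.exp_pos t).le,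
    EuclideanSpace.norm_eq]
  simp [Fin.sum_univ_two]

lemma pol_cont (x : E2) : Continuous (fun p : ℝ × ℝ => pol x p.1 p.2) := by
  unfold pol; fun_prop

lemma pol_cont_right (x : E2) (t : ℝ) : Continuous (pol x t) := by
  unfold pol; fun_prop

lemma pol_deriv_t (x : E2) (t θ : ℝ) : HasDerivAt (fun t => pol x t θ)
    (Real.exp t • (Real.cos θ • EuclideanSpace.single 0 1 +
      Real.sin θ • EuclideanSpace.single 1 1)) t :=
  ((Real.hasDerivAt_exp t).smul_const _).const_add x

lemma pol_deriv_θ (x : E2) (t θ : ℝ) : HasDerivAt (fun θ => pol x t θ)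
    (Real.exp t • ((-Real.sin θ) • EuclideanSpace.single 0 1 +
      Real.cos θ • EuclideanSpace.single 1 1)) θ := by
  have h := ((((Real.hasDerivAt_cos θ).smul_const (EuclideanSpace.single 0 1 : E2)).add
    ((Real.hasDerivAt_sin θ).smul_const (EuclideanSpace.single 1 1 : E2))).const_smul
      (Real.exp t)).const_add x
  exact h

lemma comp_deriv_t {v : E2 → ℝ} (x : E2) (t θ : ℝ) (hv : DifferentiableAt ℝ v (pol x t θ)) :
    HasDerivAt (fun t => v (pol x t θ))
      (Real.exp t * (Real.cos θ * pd 0 v (pol x t θ) + Real.sin θ * pd 1 v (pol x t θ))) t := by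
  have := hv.hasFDerivAt.comp_hasDerivAt t (pol_deriv_t x t θ)
  refine HasDerivAt.congr_deriv this ?_
  simp [pd]
  ring

lemma comp_deriv_θ {v : E2 → ℝ} (x : E2) (t θ : ℝ) (hv : DifferentiableAt ℝ v (pol x t θ)) :
    HasDerivAt (fun θ => v (pol x t θ))
      (Real.exp t * (-Real.sin θ * pd 0 v (pol x t θ) + Real.cos θ * pd 1 v (pol x t θ))) θ := by
  have := hv.hasFDerivAt.comp_hasDerivAt θ (pol_deriv_θ x t θ)
  refine HasDerivAt.congr_deriv this ?_
  simp [pd]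
  ring

lemma pd_contDiffOn_s2 {v : E2 → ℝ} {U : Set E2} (hU : IsOpen U) {n m : WithTop ℕ∞}
    (hv : ContDiffOn ℝ n v U) (hmn : m + 1 ≤ n) (j : Fin 2) : ContDiffOn ℝ m (pd j v) U :=
  (hv.fderiv_of_isOpen hU hmn).clm_apply contDiffOn_const

/-- Circle average in logarithmic radius. -/
noncomputable def av (v : E2 → ℝ) (x : E2) (t : ℝ) : ℝ :=
  (2 * Real.pi)⁻¹ * ∫ θ in (0:ℝ)..(2 * Real.pi), v (pol x t θ)

lemma av_mono {v z : E2 → ℝ} {x : E2} {t : ℝ} (hv : Continuous fun θ => v (pol x t θ))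
    (hz : Continuous fun θ => z (pol x t θ)) (h : ∀ θ, v (pol x t θ) ≤ z (pol x t θ)) :
    av v x t ≤ av z x t := by
  unfold av
  refine mul_le_mul_of_nonneg_left ?_ (by positivity)
  exact intervalIntegral.integral_mono (by positivity) (hv.intervalIntegrable _ _)
    (hz.intervalIntegrable _ _) h

lemma av_const (c : ℝ) (x : E2) (t : ℝ) : av (fun _ => c) x t = c := by
  have := Real.pi_pos
  simp [av]
  field_simp

lemma av_le {v : E2 → ℝ} {x : E2} {t c : ℝ} (hv : Continuous fun θ => v (pol x t θ))
    (h : ∀ θ, v (pol x t θ) ≤ c) : av v x t ≤ c := by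
  rw [← av_const c x t]
  exact av_mono hv continuous_const h

lemma le_av {v : E2 → ℝ} {x : E2} {t c : ℝ} (hv : Continuous fun θ => v (pol x t θ))
    (h : ∀ θ, c ≤ v (pol x t θ)) : c ≤ av v x t := by
  rw [← av_const c x t]
  exact av_mono continuous_const hv h

lemma av_exp {v : E2 → ℝ} {x : E2} {t a : ℝ} (ha : 0 ≤ a) (hv : Continuous fun θ => v (pol x t θ)) :
    a * Real.exp (av v x t) ≤ av (fun y => a * Real.exp (v y)) x t := by
  set m := av v x t with hm
  have h1 : av (fun y => a * Real.exp m * (1 + (v y - m))) x t ≤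
      av (fun y => a * Real.exp (v y)) x t := by
    refine av_mono ((continuous_const.add (hv.sub continuous_const)).const_mul _)
      ((Real.continuous_exp.comp hv).const_mul _) fun θ => ?_
    have := Real.add_one_le_exp (v (pol x t θ) - m)
    have h2 : Real.exp (v (pol x t θ)) = Real.exp m * Real.exp (v (pol x t θ) - m) := by
      rw [← Real.exp_add]; congr 1; ring
    rw [h2, mul_assoc]
    gcongr
    linarith
  have h2 : av (fun y => a * Real.exp m * (1 + (v y - m))) x t = a * Real.exp m := by
    have hpi := Real.pi_pos
    have h3 : ∫ θ in (0:ℝ)..(2 * Real.pi), v (pol x t θ) = 2 * Real.pi * m := by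
      rw [hm, av]; field_simp
    unfold av
    have h4 : ∫ θ in (0:ℝ)..(2 * Real.pi), (v (pol x t θ) - m) = 0 := by
      rw [intervalIntegral.integral_sub (hv.intervalIntegrable _ _)
        (continuous_const.intervalIntegrable _ _), h3]
      simp
    have h5 : ∫ θ in (0:ℝ)..(2 * Real.pi), (1 + (v (pol x t θ) - m)) = 2 * Real.pi := by
      have hi : IntervalIntegrable (fun θ => v (pol x t θ) - m) volume 0 (2 * Real.pi) :=
        (hv.sub continuous_const).intervalIntegrable _ _
      rw [intervalIntegral.integral_add (continuous_const.intervalIntegrable _ _) hi, h4]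
      simp
    rw [intervalIntegral.integral_const_mul, h5]
    field_simp
  linarith

section polar

variable {U : Set E2} {u : E2 → ℝ} {x : E2} {ρ : ℝ}

lemma pol_mem (hρ : 0 < ρ) (hB : ball x ρ ⊆ U) {t : ℝ} (ht : t < Real.log ρ) (θ : ℝ) :
    pol x t θ ∈ U := by
  apply hB
  rw [mem_ball, pol_dist]
  exact (Real.lt_log_iff_exp_lt hρ).1 ht

lemma comp_cont (hρ : 0 < ρ) (hB : ball x ρ ⊆ U) {v : E2 → ℝ} (hv : ContinuousOn v U) {t : ℝ}
    (ht : t < Real.log ρ) : Continuous fun θ => v (pol x t θ) :=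
  hv.comp_continuous (pol_cont_right x t) (fun θ => pol_mem hρ hB ht θ)

lemma comp_cont2 (hρ : 0 < ρ) (hB : ball x ρ ⊆ U) {v : E2 → ℝ} (hv : ContinuousOn v U) :
    ContinuousOn (fun p : ℝ × ℝ => v (pol x p.1 p.2)) (Set.Iio (Real.log ρ) ×ˢ Set.univ) :=
  hv.comp (pol_cont x).continuousOn (fun p hp => pol_mem hρ hB hp.1 p.2)

lemma av_derivs (hU : IsOpen U) (hu : ContDiffOn ℝ 2 u U) (hρ : 0 < ρ) (hB : ball x ρ ⊆ U) :
    ∃ G1 : ℝ → ℝ, (∀ t < Real.log ρ, HasDerivAt (av u x) (G1 t) t) ∧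
      (∀ t < Real.log ρ, HasDerivAt G1 (Real.exp t ^ 2 * av (lapl u) x t) t) := by
  have hc := hu.continuousOn
  have hp : ∀ j, ContDiffOn ℝ 1 (pd j u) U := fun j => pd_contDiffOn_s2 hU hu (by norm_num) j
  have hpc : ∀ j, ContinuousOn (pd j u) U := fun j => (hp j).continuousOn
  have hpp : ∀ i j, ContinuousOn (pd i (pd j u)) U := fun i j =>
    (pd_contDiffOn_s2 hU (m := 0) (hp j) (by norm_num) i).continuousOn
  have hdu : ∀ y ∈ U, DifferentiableAt ℝ u y := fun y hy =>
    (hu.contDiffAt (hU.mem_nhds hy)).differentiableAt (by norm_num)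
  have hdp : ∀ j, ∀ y ∈ U, DifferentiableAt ℝ (pd j u) y := fun j y hy =>
    ((hp j).contDiffAt (hU.mem_nhds hy)).differentiableAt (by norm_num)
  set P : ℝ → ℝ → ℝ := fun t θ =>
    Real.exp t * (Real.cos θ * pd 0 u (pol x t θ) + Real.sin θ * pd 1 u (pol x t θ)) with hPdef
  set Q : ℝ → ℝ → ℝ := fun t θ =>
    Real.exp t * (-Real.sin θ * pd 0 u (pol x t θ) + Real.cos θ * pd 1 u (pol x t θ)) with hQdef
  set p : Fin 2 → Fin 2 → ℝ → ℝ → ℝ := fun i j t θ => pd i (pd j u) (pol x t θ) with hpdef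
  set Pt : ℝ → ℝ → ℝ := fun t θ => P t θ + Real.exp t * (
    Real.cos θ * (Real.exp t * (Real.cos θ * p 0 0 t θ + Real.sin θ * p 1 0 t θ)) +
    Real.sin θ * (Real.exp t * (Real.cos θ * p 0 1 t θ + Real.sin θ * p 1 1 t θ))) with hPtdef
  set Qθ : ℝ → ℝ → ℝ := fun t θ => -P t θ + Real.exp t * (
    -Real.sin θ * (Real.exp t * (-Real.sin θ * p 0 0 t θ + Real.cos θ * p 1 0 t θ)) +
    Real.cos θ * (Real.exp t * (-Real.sin θ * p 0 1 t θ + Real.cos θ * p 1 1 t θ))) with hQθdef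
  have hsum : ∀ t θ, Pt t θ = Real.exp t ^ 2 * lapl u (pol x t θ) - Qθ t θ := by
    intro t θ
    have := Real.sin_sq_add_cos_sq θ
    simp only [hPtdef, hQθdef, lapl, hpdef]
    linear_combination (Real.exp t ^ 2 * (pd 0 (pd 0 u) (pol x t θ) + pd 1 (pd 1 u) (pol x t θ))) * this
  have hcp : ∀ j, ContinuousOn (fun q : ℝ × ℝ => pd j u (pol x q.1 q.2))
      (Set.Iio (Real.log ρ) ×ˢ Set.univ) := fun j => comp_cont2 hρ hB (hpc j)
  have hcpp : ∀ i j, ContinuousOn (fun q : ℝ × ℝ => p i j q.1 q.2)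
      (Set.Iio (Real.log ρ) ×ˢ Set.univ) := fun i j => comp_cont2 hρ hB (hpp i j)
  have hslice : ∀ {F : ℝ → ℝ → ℝ}, ContinuousOn (fun q : ℝ × ℝ => F q.1 q.2)
      (Set.Iio (Real.log ρ) ×ˢ Set.univ) → ∀ t < Real.log ρ, Continuous (F t) := by
    intro F hF t ht
    have : ContinuousOn (fun θ : ℝ => F t θ) Set.univ :=
      hF.comp (f := fun θ : ℝ => (t, θ)) (by fun_prop) (fun θ _ => ⟨ht, trivial⟩)
    exact continuousOn_univ.1 this
  have hcP : ContinuousOn (fun q : ℝ × ℝ => P q.1 q.2) (Set.Iio (Real.log ρ) ×ˢ Set.univ) := by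
    have h0 := hcp 0
    have h1 := hcp 1
    simp only [hPdef]
    fun_prop
  have hcPt : ContinuousOn (fun q : ℝ × ℝ => Pt q.1 q.2) (Set.Iio (Real.log ρ) ×ˢ Set.univ) := by
    have h00 := hcpp 0 0
    have h01 := hcpp 0 1
    have h10 := hcpp 1 0
    have h11 := hcpp 1 1
    simp only [hPtdef]
    fun_prop
  have hcQθ : ContinuousOn (fun q : ℝ × ℝ => Qθ q.1 q.2) (Set.Iio (Real.log ρ) ×ˢ Set.univ) := by
    have h00 := hcpp 0 0
    have h01 := hcpp 0 1
    have h10 := hcpp 1 0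
    have h11 := hcpp 1 1
    simp only [hQθdef]
    fun_prop
  have hclap : ContinuousOn (lapl u) U := (hpp 0 0).add (hpp 1 1)
  refine ⟨fun t => (2 * Real.pi)⁻¹ * ∫ θ in (0:ℝ)..(2 * Real.pi), P t θ, ?_, ?_⟩
  · intro t ht
    exact (deriv_param (fun s hs θ => comp_deriv_t x s θ (hdu _ (pol_mem hρ hB hs θ)))
      (fun s hs => comp_cont hρ hB hc hs) hcP t ht).const_mul _
  · intro t ht
    have hQd : ∀ θ, HasDerivAt (Q t) (Qθ t θ) θ := by
      intro θ
      have m := pol_mem hρ hB ht θ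
      have h := ((((Real.hasDerivAt_sin θ).neg).mul (comp_deriv_θ x t θ (hdp 0 _ m))).add
        ((Real.hasDerivAt_cos θ).mul (comp_deriv_θ x t θ (hdp 1 _ m)))).const_mul (Real.exp t)
      refine HasDerivAt.congr_deriv h ?_
      simp only [hQθdef, hPdef, hpdef, Pi.neg_apply]
      ring
    have hQint : ∫ θ in (0:ℝ)..(2 * Real.pi), Qθ t θ = 0 := by
      rw [intervalIntegral.integral_eq_sub_of_hasDerivAt (fun θ _ => hQd θ)
        ((hslice hcQθ t ht).intervalIntegrable _ _)]
      simp [hQdef, pol]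
    have hint : ∫ θ in (0:ℝ)..(2 * Real.pi), Pt t θ =
        Real.exp t ^ 2 * ∫ θ in (0:ℝ)..(2 * Real.pi), lapl u (pol x t θ) := by
      simp_rw [hsum]
      rw [intervalIntegral.integral_sub, hQint, intervalIntegral.integral_const_mul, sub_zero]
      · exact ((comp_cont hρ hB hclap ht).const_mul _).intervalIntegrable _ _
      · exact (hslice hcQθ t ht).intervalIntegrable _ _
    have h := (deriv_param (W := P) (P := Pt) (τ := Real.log ρ) ?_
      (fun s hs => hslice hcP s hs) hcPt t ht).const_mul ((2 * Real.pi)⁻¹)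
    · refine h.congr_deriv ?_
      rw [hint, av]; ring
    · intro s hs θ
      have m := pol_mem hρ hB hs θ
      have h := (Real.hasDerivAt_exp s).mul (((comp_deriv_t x s θ (hdp 0 _ m)).const_mul (Real.cos θ)).add
        ((comp_deriv_t x s θ (hdp 1 _ m)).const_mul (Real.sin θ)))
      refine HasDerivAt.congr_deriv h ?_
      simp only [hPtdef, hPdef, hpdef, Pi.add_apply]

lemma av_tendsto (hρ : 0 < ρ) (hB : ball x ρ ⊆ U) (hU : IsOpen U) (hu : ContinuousOn u U) :
    Tendsto (av u x) atBot (nhds (u x)) := by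
  have hx : x ∈ U := hB (mem_ball_self hρ)
  rw [Metric.tendsto_nhds]
  intro ε hε
  obtain ⟨δ, hδ, hd⟩ := Metric.continuousAt_iff.1 (hu.continuousAt (hU.mem_nhds hx)) (ε / 2) (by linarith)
  filter_upwards [eventually_lt_atBot (Real.log ρ), eventually_lt_atBot (Real.log δ)] with t ht ht2
  have hb : ∀ θ, |u (pol x t θ) - u x| < ε / 2 := by
    intro θ
    have := hd (x := pol x t θ) (by rw [pol_dist]; exact (Real.lt_log_iff_exp_lt hδ).1 ht2)
    simpa [Real.dist_eq] using this
  have hcu := comp_cont hρ hB hu ht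
  have h1 : av u x t ≤ u x + ε / 2 := av_le hcu fun θ => by have := abs_lt.1 (hb θ); linarith
  have h2 : u x - ε / 2 ≤ av u x t := le_av hcu fun θ => by have := abs_lt.1 (hb θ); linarith
  rw [Real.dist_eq, abs_lt]
  constructor <;> linarith

end polar

lemma av_neg (v : E2 → ℝ) (x : E2) (t : ℝ) : av (fun y => -v y) x t = -av v x t := by
  simp [av]

lemma lapl_cont {U : Set E2} {u : E2 → ℝ} (hU : IsOpen U) (hu : ContDiffOn ℝ 2 u U) :
    ContinuousOn (lapl u) U := by
  have h : ∀ j, ContinuousOn (pd j (pd j u)) U := fun j =>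
    (pd_contDiffOn_s2 hU (m := 0) (pd_contDiffOn_s2 hU (m := 1) hu (by norm_num) j)
      (by norm_num) j).continuousOn
  exact (h 0).add (h 1)

section main

variable {U : Set E2} {u : E2 → ℝ} {x : E2} {ρ a : ℝ}

lemma av_lapl_le (hU : IsOpen U) (hu : ContDiffOn ℝ 2 u U) (hρ : 0 < ρ) (hB : ball x ρ ⊆ U)
    (ha : 0 ≤ a) (hl : ∀ y ∈ U, lapl u y ≤ -(a * Real.exp (u y))) {t : ℝ} (ht : t < Real.log ρ) :
    av (lapl u) x t ≤ -(a * Real.exp (av u x t)) := by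
  have hcu := comp_cont hρ hB hu.continuousOn ht
  have h1 := av_exp ha hcu
  have h2 : av (lapl u) x t ≤ av (fun y => -(a * Real.exp (u y))) x t :=
    av_mono (comp_cont hρ hB (lapl_cont hU hu) ht)
      (((Real.continuous_exp.comp hcu).const_mul _).neg) fun θ => hl _ (pol_mem hρ hB ht θ)
  rw [av_neg (fun y => a * Real.exp (u y))] at h2
  linarith

/-- Superharmonicity: circle means are nonincreasing and below the central value. -/
lemma av_super (hU : IsOpen U) (hu : ContDiffOn ℝ 2 u U) (hρ : 0 < ρ) (hB : ball x ρ ⊆ U)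
    (ha : 0 ≤ a) (hl : ∀ y ∈ U, lapl u y ≤ -(a * Real.exp (u y))) {m : ℝ}
    (hm : ∀ y ∈ U, m ≤ u y) {G1 : ℝ → ℝ}
    (h1 : ∀ t < Real.log ρ, HasDerivAt (av u x) (G1 t) t)
    (h2 : ∀ t < Real.log ρ, HasDerivAt G1 (Real.exp t ^ 2 * av (lapl u) x t) t) :
    ∀ t < Real.log ρ, G1 t ≤ 0 ∧ av u x t ≤ u x := by
  have h1' : ∀ t < Real.log ρ, HasDerivAt (fun t => -av u x t) (-G1 t) t :=
    fun t ht => (h1 t ht).neg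
  have h2' : ∀ t < Real.log ρ, HasDerivAt (fun t => -G1 t)
    (-(Real.exp t ^ 2 * av (lapl u) x t)) t := fun t ht => (h2 t ht).neg
  have hA := deriv_nonneg_of_bdd (B := -m) h1' h2' (by
      intro t ht
      have h := av_lapl_le hU hu hρ hB ha hl ht
      have h3 : 0 ≤ a * Real.exp (av u x t) := by positivity
      have h4 : 0 ≤ Real.exp t ^ 2 := by positivity
      nlinarith) (by
      intro t ht
      have := le_av (comp_cont hρ hB hu.continuousOn ht) fun θ => hm _ (pol_mem hρ hB ht θ)
      linarith)
  have hT := ge_limit (mono_Iio h1' hA) (av_tendsto hρ hB hU hu.continuousOn).neg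
  intro t ht
  exact ⟨by linarith [hA t ht], by linarith [hT t ht]⟩

/-- No interior minimum. -/
lemma no_min (hU : IsOpen U) (hu : ContDiffOn ℝ 2 u U) (ha : 0 < a)
    (hl : ∀ y ∈ U, lapl u y ≤ -(a * Real.exp (u y))) (hx : x ∈ U) (hm : ∀ y ∈ U, u x ≤ u y) :
    False := by
  obtain ⟨ρ, hρ, hB⟩ := Metric.isOpen_iff.1 hU x hx
  obtain ⟨G1, h1, h2⟩ := av_derivs hU hu hρ hB
  have hs := av_super hU hu hρ hB ha.le hl hm h1 h2
  have heq : ∀ t < Real.log ρ, av u x t = u x := fun t ht => le_antisymm (hs t ht).2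
    (le_av (comp_cont hρ hB hu.continuousOn ht) fun θ => hm _ (pol_mem hρ hB ht θ))
  have hG1 : ∀ t < Real.log ρ, G1 t = 0 := by
    intro t ht
    refine (h1 t ht).unique ?_
    refine (hasDerivAt_const t (u x)).congr_of_eventuallyEq ?_
    filter_upwards [Iio_mem_nhds ht] with s hs
    exact heq s hs
  have ht : Real.log ρ - 1 < Real.log ρ := by linarith
  have hG2 : Real.exp (Real.log ρ - 1) ^ 2 * av (lapl u) x (Real.log ρ - 1) = 0 := by
    refine (h2 _ ht).unique ?_
    refine (hasDerivAt_const _ (0:ℝ)).congr_of_eventuallyEq ?_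
    filter_upwards [Iio_mem_nhds ht] with s hs
    exact hG1 s hs
  have h3 := av_lapl_le hU hu hρ hB ha.le hl ht
  have h4 : 0 < a * Real.exp (av u x (Real.log ρ - 1)) := by positivity
  have h5 : 0 < Real.exp (Real.log ρ - 1) ^ 2 := by positivity
  nlinarith

lemma local_bound {b R σ : ℝ} (hU : IsOpen U) (hu : ContDiffOn ℝ 2 u U) (ha : 0 < a) (hb : 0 ≤ b)
    (hl : ∀ y ∈ U, lapl u y ≤ -(a * Real.exp (u y)))
    (hl' : ∀ y ∈ U, -(b * Real.exp (u y)) ≤ lapl u y)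
    (hpos : ∀ y ∈ U, 0 ≤ u y) (hR : 0 < R) (hB : ball x (2 * R) ⊆ U)
    (hσ : 0 < σ) (hσR : σ ≤ R)
    (hfour : ∀ y, dist y x < σ → Real.exp (u y) ≤ 4 * Real.exp (u x))
    (hbig : 1 < Real.exp (u x / 2) * σ) :
    u x / 2 + Real.log R ≤ 1 + 2 * (2 + max b (-(2 * Real.log R))) /
      (a * Real.exp (-(max b (-(2 * Real.log R))))) := by
  set T := u x with hT
  set C := max b (-(2 * Real.log R)) with hC
  have h2R : 0 < 2 * R := by positivity
  obtain ⟨G1, h1, h2⟩ := av_derivs hU hu h2R hB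
  have hs := av_super hU hu h2R hB ha.le hl hpos h1 h2
  have hlogR : Real.log R < Real.log (2 * R) := Real.log_lt_log hR (by linarith)
  have hlogσ : Real.log σ ≤ Real.log R := Real.log_le_log hσ hσR
  have ht0 : -(T / 2) < Real.log σ := by
    have := Real.log_pos hbig
    rw [Real.log_mul (Real.exp_pos _).ne' hσ.ne', Real.log_exp] at this
    linarith
  have hσlt : ∀ t < Real.log σ, t < Real.log (2 * R) := fun t ht => by linarith
  have hcu : ∀ t < Real.log (2 * R), Continuous fun θ => u (pol x t θ) :=
    fun t ht => comp_cont h2R hB hu.continuousOn ht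
  have hexp : ∀ t < Real.log σ, Real.exp t < σ := fun t ht => (Real.lt_log_iff_exp_lt hσ).1 ht
  -- lower bound near the centre
  have hlow : ∀ t < Real.log σ, T ≤ av u x t + b * Real.exp T * Real.exp t ^ 2 := by
    have hd : ∀ t : ℝ, HasDerivAt (fun t => Real.exp t ^ 2) (2 * Real.exp t ^ 2) t := by
      intro t
      refine ((Real.hasDerivAt_exp t).pow 2).congr_deriv ?_
      norm_num; ring
    have k1 : ∀ t < Real.log σ, HasDerivAt (fun t => av u x t + b * Real.exp T * Real.exp t ^ 2)
        (G1 t + b * Real.exp T * (2 * Real.exp t ^ 2)) t :=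
      fun t ht => (h1 t (hσlt t ht)).add ((hd t).const_mul _)
    have k2 : ∀ t < Real.log σ, HasDerivAt (fun t => G1 t + b * Real.exp T * (2 * Real.exp t ^ 2))
        (Real.exp t ^ 2 * av (lapl u) x t + b * Real.exp T * (2 * (2 * Real.exp t ^ 2))) t :=
      fun t ht => (h2 t (hσlt t ht)).add (((hd t).const_mul 2).const_mul _)
    have k3 := deriv_nonneg_of_bdd (B := T + Real.log 4 + b * Real.exp T * σ ^ 2) k1 k2 (by
        intro t ht
        have : -(4 * b * Real.exp T) ≤ av (lapl u) x t := by
          refine le_av (comp_cont h2R hB (lapl_cont hU hu) (hσlt t ht)) fun θ => ?_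
          refine le_trans ?_ (hl' _ (pol_mem h2R hB (hσlt t ht) θ))
          have := hfour (pol x t θ) (by rw [pol_dist]; exact hexp t ht)
          have := mul_le_mul_of_nonneg_left this hb
          linarith
        have h4 : 0 ≤ Real.exp t ^ 2 := by positivity
        nlinarith) (by
        intro t ht
        have q1 : av u x t ≤ T + Real.log 4 := by
          refine av_le (hcu t (hσlt t ht)) fun θ => ?_
          have := hfour (pol x t θ) (by rw [pol_dist]; exact hexp t ht)
          rw [← Real.exp_le_exp, Real.exp_add, Real.exp_log (by norm_num)]
          linarith
        have q2 : Real.exp t ^ 2 ≤ σ ^ 2 :=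
          pow_le_pow_left₀ (Real.exp_pos t).le (hexp t ht).le 2
        have q3 : 0 ≤ b * Real.exp T := by positivity
        have := mul_le_mul_of_nonneg_left q2 q3
        linarith)
    refine ge_limit (mono_Iio k1 k3) ?_
    have := (av_tendsto h2R hB hU hu.continuousOn).add
      (((Real.tendsto_exp_atBot).pow 2).const_mul (b * Real.exp T))
    simpa using this
  have hcore := core_bound (τ := Real.log (2 * R)) (t0 := -(T / 2)) (t1 := Real.log R) (a := a)
    (C := C) (w := fun t => av u x t + 2 * t) (w1 := fun t => G1 t + 2)
    (w2 := fun t => Real.exp t ^ 2 * av (lapl u) x t) ha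
    (fun t ht => ((h1 t ht).add ((hasDerivAt_id t).const_mul 2)).congr_deriv (by simp))
    (fun t ht => (h2 t ht).add_const 2)
    (by
      intro t ht
      have h3 := av_lapl_le hU hu h2R hB ha.le hl ht
      have h4 : 0 ≤ Real.exp t ^ 2 := by positivity
      have h5 := mul_le_mul_of_nonneg_left h3 h4
      have h6 : Real.exp (av u x t + 2 * t) = Real.exp (av u x t) * Real.exp t ^ 2 := by
        rw [Real.exp_add, two_mul, Real.exp_add]; ring
      simp only [h6]
      linarith)
    (fun t ht => by linarith [(hs t ht).1])
    (by linarith) hlogR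
    (by
      have := (hs (-(T / 2)) (by linarith)).2
      linarith)
    (by
      have h3 := hlow _ ht0
      have h4 : Real.exp T * Real.exp (-(T / 2)) ^ 2 = 1 := by
        rw [← Real.exp_nat_mul, ← Real.exp_add, Real.exp_eq_one_iff]
        push_cast; ring
      have h5 : b ≤ C := le_max_left _ _
      rw [mul_assoc, h4] at h3
      linarith)
    (by
      have h3 : 0 ≤ av u x (Real.log R) := le_av (hcu _ hlogR) fun θ =>
        hpos _ (pol_mem h2R hB hlogR θ)
      have h5 : -(2 * Real.log R) ≤ C := le_max_right _ _
      linarith)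
    (hb.trans (le_max_left _ _))
  linarith

end main

theorem stmt2 (Ω : Set E2) (hΩo : IsOpen Ω) (hΩb : Bornology.IsBounded Ω)
    (a b : ℝ) (ha : 0 < a) (hab : a ≤ b)
    (K : Set E2) (hK : IsCompact K) (hKΩ : K ⊆ Ω) :
    ∃ c : ℝ, ∀ V u : E2 → ℝ,
      (∀ x ∈ Ω, a ≤ V x ∧ V x ≤ b) →
      ContDiffOn ℝ 2 u (closure Ω) →
      (∀ x ∈ Ω, -(lapl u x) = V x * Real.exp (u x)) →
      (∀ x ∈ frontier Ω, u x = 0) →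
      ∀ x ∈ K, u x ≤ c := by
  obtain ⟨δ, hδ, hKδ⟩ := hK.exists_thickening_subset_open hΩo hKΩ
  set R := δ / 3 with hRdef
  have hR : 0 < R := by positivity
  set L := 1 + 2 * (2 + max b (-(2 * Real.log R))) /
      (a * Real.exp (-(max b (-(2 * Real.log R))))) with hL
  refine ⟨max (2 * Real.log (2 / R)) (2 * (L - Real.log R)), ?_⟩
  intro V u hV hu hP hbd x1 hx1
  have huΩ : ContDiffOn ℝ 2 u Ω := hu.mono subset_closure
  have hl : ∀ y ∈ Ω, lapl u y ≤ -(a * Real.exp (u y)) := by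
    intro y hy
    have h1 := hP y hy
    have h2 := mul_le_mul_of_nonneg_right (hV y hy).1 (Real.exp_pos (u y)).le
    linarith
  have hl' : ∀ y ∈ Ω, -(b * Real.exp (u y)) ≤ lapl u y := by
    intro y hy
    have h1 := hP y hy
    have h2 := mul_le_mul_of_nonneg_right (hV y hy).2 (Real.exp_pos (u y)).le
    linarith
  have hpos : ∀ y ∈ Ω, 0 ≤ u y := by
    have hcomp : IsCompact (closure Ω) := hΩb.isCompact_closure
    intro y hy
    obtain ⟨z, hz, hmin⟩ := hcomp.exists_isMinOn ⟨y, subset_closure hy⟩ hu.continuousOn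
    have hzy : u z ≤ u y := hmin (subset_closure hy)
    by_cases hzΩ : z ∈ Ω
    · exact (no_min hΩo huΩ ha hl hzΩ (fun w hw => hmin (subset_closure hw))).elim
    · have : z ∈ frontier Ω := by
        rw [hΩo.frontier_eq]; exact ⟨hz, hzΩ⟩
      rw [hbd z this] at hzy
      exact hzy
  have hball : ball x1 (3 * R) ⊆ Ω := by
    intro y hy
    apply hKδ
    rw [mem_thickening_iff]
    refine ⟨x1, hx1, ?_⟩
    rw [mem_ball] at hy
    have : 3 * R = δ := by rw [hRdef]; ring
    linarith
  have hcb : closedBall x1 R ⊆ Ω := (closedBall_subset_ball (by linarith)).trans hball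
  obtain ⟨x0, hx0, hmax⟩ := (isCompact_closedBall x1 R).exists_isMaxOn
    (f := fun y => Real.exp (u y / 2) * (R - dist y x1)) ⟨x1, mem_closedBall_self hR.le⟩ (by
      have := huΩ.continuousOn.mono hcb
      fun_prop)
  have hmax' : ∀ y, dist y x1 ≤ R → Real.exp (u y / 2) * (R - dist y x1) ≤
      Real.exp (u x0 / 2) * (R - dist x0 x1) := fun y hy => hmax (mem_closedBall.2 hy)
  set d := R - dist x0 x1 with hd
  have h1 := hmax' x1 (by simpa using hR.le)
  rw [dist_self, sub_zero] at h1
  have hd0 : 0 < d := by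
    by_contra! hcon
    have h2 : 0 < Real.exp (u x1 / 2) * R := by positivity
    have h3 : Real.exp (u x0 / 2) * d ≤ 0 :=
      mul_nonpos_of_nonneg_of_nonpos (Real.exp_pos _).le hcon
    linarith
  have hdR : d ≤ R := by have := dist_nonneg (x := x0) (y := x1); linarith
  by_cases hbig : 1 < Real.exp (u x0 / 2) * (d / 2)
  · refine le_trans ?_ (le_max_right _ _)
    have hx0' : dist x0 x1 ≤ R := mem_closedBall.1 hx0
    have hB : ball x0 (2 * R) ⊆ Ω := by
      refine Set.Subset.trans (ball_subset_ball' ?_) hball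
      linarith
    have h2 := local_bound (σ := d / 2) hΩo huΩ ha (ha.le.trans hab) hl hl' hpos hR hB
      (by linarith) (by linarith) (by
        intro y hy
        have hyd : dist y x1 ≤ dist y x0 + dist x0 x1 := dist_triangle _ _ _
        have h3 := hmax' y (by linarith)
        have h4 : d / 2 ≤ R - dist y x1 := by linarith
        have h5 : Real.exp (u y / 2) * (d / 2) ≤ Real.exp (u x0 / 2) * d :=
          (mul_le_mul_of_nonneg_left h4 (Real.exp_pos _).le).trans h3
        have h6 : Real.exp (u y / 2) ≤ 2 * Real.exp (u x0 / 2) := by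
          by_contra! hcon
          have := mul_lt_mul_of_pos_right hcon (show 0 < d / 2 by linarith)
          linarith
        have h7 : ∀ s : ℝ, Real.exp s = Real.exp (s / 2) ^ 2 := by
          intro s
          rw [← Real.exp_nat_mul]; congr 1; push_cast; ring
        rw [h7 (u y), h7 (u x0)]
        have := pow_le_pow_left₀ (Real.exp_pos _).le h6 2
        linarith) hbig
    have h3 : Real.exp (u x1 / 2) ≤ Real.exp (u x0 / 2) := by
      have h4 : Real.exp (u x1 / 2) * R ≤ Real.exp (u x0 / 2) * R :=
        h1.trans (mul_le_mul_of_nonneg_left hdR (Real.exp_pos _).le)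
      exact le_of_mul_le_mul_right h4 hR
    rw [Real.exp_le_exp] at h3
    linarith
  · refine le_trans ?_ (le_max_left _ _)
    push Not at hbig
    have h2 : Real.exp (u x1 / 2) ≤ 2 / R := by
      rw [le_div_iff₀ hR]; linarith
    have := (Real.le_log_iff_exp_le (by positivity)).2 h2
    linarith
end
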